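/- arXiv:2209.04534 — 3 statements merged into one kernel-verified Lean document; each statement's English description precedes it below -/
import Mathlib

section
/- Let E be a real Hilbert space, S ⊆ E a nonempty closed convex set, T > 0, and x : [0, T] → E a trajectory such that x(t) ∉ S for all t ∈ [0, T]. Suppose that for every t ∈ [0, T], x has derivative x′(t) = c(t)·(x(t) − p(t)) at t, where p(t) is the metric projection of x(t) onto S and c(t) ≥ 0. Then the distance function t ↦ inf_{s ∈ S} ‖x(t) − s‖ is monotone non-decreasing on [0, T]. -/
/-!
Write `d t` for the distance from `x t` to `S`, and fix a time `t` with `u = x t - p t`. Convexity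
places `S` in the half-space `⟪u, s - p t⟫ ≤ 0`, so for every point `y` the distance to `S` is at
least the distance to this half-space: `⟪u, y - p t⟫ ≤ ‖u‖ * infDist y S`
(`inner_le_norm_mul_infDist`). With `y = x z` this bounds `d` from below near `t` by a function
that agrees with `d` at `t` and has derivative `c t * ‖u‖ ≥ 0` there. Hence `-d` has nonpositive
upper right Dini derivative at every time, and a continuous function with this property is
nonincreasing. No differentiability of the distance function or continuity of `p` is needed.
-/

theorem infDist_eq_norm_sub_of_forall_le {E : Type*} [NormedAddCommGroup E] {S : Set E} {y q : E}
    (hq : q ∈ S) (hmin : ∀ s ∈ S, ‖y - q‖ ≤ ‖y - s‖) : Metric.infDist y S = ‖y - q‖ := by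
  apply le_antisymm
  · simpa [dist_eq_norm] using Metric.infDist_le_dist_of_mem (x := y) hq
  · refine (Metric.le_infDist ⟨q, hq⟩).2 fun s hs => ?_
    simpa [dist_eq_norm] using hmin s hs

/-- The supporting half-space at the point `q` of `S` closest to `w` contains `S`, so the signed
distance `⟪w - q, y - q⟫ / ‖w - q‖` from `y` to it is at most the distance from `y` to `S`. -/
theorem inner_le_norm_mul_infDist {E : Type*} [NormedAddCommGroup E] [InnerProductSpace ℝ E]
    {S : Set E} (hS : Convex ℝ S) {w q : E} (hq : q ∈ S)
    (hmin : ∀ s ∈ S, ‖w - q‖ ≤ ‖w - s‖) (hpos : 0 < ‖w - q‖) (y : E) :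
    inner ℝ (w - q) (y - q) ≤ ‖w - q‖ * Metric.infDist y S := by
  have hhalf : ∀ s ∈ S, inner ℝ (w - q) (s - q) ≤ 0 := by
    refine (norm_eq_iInf_iff_real_inner_le_zero hS hq).1 ?_
    have : Nonempty S := ⟨⟨q, hq⟩⟩
    refine le_antisymm (le_ciInf fun s => hmin s s.2) ?_
    exact ciInf_le (f := fun s : S => ‖w - s‖)
      ⟨0, by rintro _ ⟨s, rfl⟩; exact norm_nonneg _⟩ ⟨q, hq⟩
  rw [mul_comm, ← div_le_iff₀ hpos]
  refine (Metric.le_infDist ⟨q, hq⟩).2 fun s hs => ?_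
  rw [div_le_iff₀ hpos, dist_eq_norm, mul_comm]
  have hsplit : y - q = (y - s) + (s - q) := by abel
  rw [hsplit, inner_add_right]
  linarith [hhalf s hs, real_inner_le_norm (w - q) (y - s)]


/-- If the robot always moves in the direction `c(t)·(x(t) − p(t))`, where `p(t)` is the
metric projection of `x(t)` onto a nonempty closed convex set `S` and `c(t) ≥ 0`, then the
distance from the robot to `S` is non-decreasing on `[0, T]`. -/
theorem distance_nondecreasing_under_repulsive_motion
    {E : Type*} [NormedAddCommGroup E] [InnerProductSpace ℝ E] [CompleteSpace E]
    (S : Set E) (hS : S.Nonempty) (hSclosed : IsClosed S) (hSconv : Convex ℝ S)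
    (T : ℝ) (hT : 0 < T) (x : ℝ → E) (p : ℝ → E) (c : ℝ → ℝ)
    (hx : ∀ t ∈ Set.Icc (0 : ℝ) T, x t ∉ S)
    (hpS : ∀ t ∈ Set.Icc (0 : ℝ) T, p t ∈ S)
    (hpmin : ∀ t ∈ Set.Icc (0 : ℝ) T, ∀ s ∈ S, ‖x t - p t‖ ≤ ‖x t - s‖)
    (hc : ∀ t ∈ Set.Icc (0 : ℝ) T, 0 ≤ c t)
    (hderiv : ∀ t ∈ Set.Icc (0 : ℝ) T, HasDerivAt x (c t • (x t - p t)) t) :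
    MonotoneOn (fun t => Metric.infDist (x t) S) (Set.Icc (0 : ℝ) T) := by
  intro a ha b hb hab
  have hsub : ∀ t ∈ Set.Icc a b, t ∈ Set.Icc (0 : ℝ) T := fun t ht =>
    ⟨ha.1.trans ht.1, ht.2.trans hb.2⟩
  have hcont : ContinuousOn (fun t => -Metric.infDist (x t) S) (Set.Icc a b) := fun t ht =>
    (((Metric.continuous_infDist_pt S).continuousAt.comp
      (hderiv t (hsub t ht)).continuousAt).neg).continuousWithinAt
  have key := image_le_of_liminf_slope_right_le_deriv_boundary
    (f := fun t => -Metric.infDist (x t) S) (a := a) (b := b)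
    (B := fun _ => -Metric.infDist (x a) S) (B' := fun _ => 0) hcont le_rfl
    continuousOn_const (fun t _ => hasDerivWithinAt_const _ _ _) ?_ (Set.right_mem_Icc.2 hab)
  · simpa using key
  intro t ht r hr
  have htT := hsub t ⟨ht.1, ht.2.le⟩
  have hpos : 0 < ‖x t - p t‖ := by
    rw [norm_pos_iff, sub_ne_zero]
    intro h
    exact hx t htT (h ▸ hpS t htT)
  have hd := infDist_eq_norm_sub_of_forall_le (hpS t htT) (hpmin t htT)
  have hg : HasDerivAt (fun z => inner ℝ (x t - p t) (x z))
      (inner ℝ (x t - p t) (c t • (x t - p t))) t :=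
    (innerSL ℝ (x t - p t)).hasFDerivAt.comp_hasDerivAt t (hderiv t htT)
  have hnonneg : 0 ≤ inner ℝ (x t - p t) (c t • (x t - p t)) := by
    rw [inner_smul_right]
    exact mul_nonneg (hc t htT) real_inner_self_nonneg
  have hlim := (hasDerivAt_iff_tendsto_slope.1 hg).mono_left
    (nhdsWithin_mono t fun z (hz : t < z) => hz.ne')
  have hlt : -(‖x t - p t‖ * r) < inner ℝ (x t - p t) (c t • (x t - p t)) := by
    have := mul_pos hpos hr
    linarith
  refine Filter.Eventually.frequently ?_
  filter_upwards [hlim.eventually (lt_mem_nhds hlt), self_mem_nhdsWithin] with z hz htz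
  have hzt : 0 < z - t := sub_pos.2 htz
  have hbound := inner_le_norm_mul_infDist hSconv (hpS t htT) (hpmin t htT) hpos (x z)
  have hsplit : x z - p t = (x z - x t) + (x t - p t) := by abel
  rw [hsplit, inner_add_right, inner_sub_right, real_inner_self_eq_norm_sq] at hbound
  rw [slope_def_field, lt_div_iff₀ hzt] at hz
  rw [slope_def_field, div_lt_iff₀ hzt, hd]
  refine lt_of_mul_lt_mul_left ?_ hpos.le
  nlinarith
end

section
/- Let T > 0, δ ∈ ℝ, and let d : [0, T] → ℝ be continuous with d(0) > δ. Suppose that for every t ∈ [0, T], if d(t) > δ then (d(t) − δ)⁻² ≤ (d(0) − δ)⁻². Then d(t) ≥ d(0) for all t ∈ [0, T]; in particular d(t) > δ for all t ∈ [0, T]. -/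
/-!
The barrier bound says that `d` takes no value in the open gap `(δ, d 0)`, since
`x ↦ (x - δ)⁻²` is strictly decreasing for `x > δ`. If `d` dropped below `d 0` at some time, the
intermediate value theorem would force it to take a value in that gap.
-/

/-- Barrier argument: if `d` is continuous on `[0, T]` with `d 0 > δ`, and whenever
`d t > δ` the barrier value `(d t − δ)⁻²` does not exceed its initial value, then
`d t ≥ d 0 > δ` for all `t ∈ [0, T]`. -/
theorem barrier_keeps_distance_above_threshold
    (T δ : ℝ) (hT : 0 < T) (d : ℝ → ℝ)
    (hcont : ContinuousOn d (Set.Icc 0 T))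
    (h0 : δ < d 0)
    (hbar : ∀ t ∈ Set.Icc (0 : ℝ) T, δ < d t → (d t - δ)⁻¹ ^ 2 ≤ (d 0 - δ)⁻¹ ^ 2) :
    ∀ t ∈ Set.Icc (0 : ℝ) T, d 0 ≤ d t ∧ δ < d t := by
  have gap : ∀ s ∈ Set.Icc (0 : ℝ) T, δ < d s → d 0 ≤ d s := by
    intro s hs hδ
    have h := hbar s hs hδ
    have hs0 : 0 < d s - δ := sub_pos.mpr hδ
    have h00 : 0 < d 0 - δ := sub_pos.mpr h0
    have h1 : (d s - δ)⁻¹ ≤ (d 0 - δ)⁻¹ :=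
      (sq_le_sq₀ (inv_pos.mpr hs0).le (inv_pos.mpr h00).le).mp h
    have h2 := (inv_le_inv₀ hs0 h00).mp h1
    linarith
  intro t ht
  have key : d 0 ≤ d t := by
    by_contra! hlt
    -- The midpoint of `δ` and `d 0` lies in the gap; the maximum also keeps the value `≥ d t`.
    obtain ⟨s, hs, hds⟩ := intermediate_value_Icc' ht.1
      (hcont.mono (Set.Icc_subset_Icc_right ht.2))
      (show max (d t) ((δ + d 0) / 2) ∈ Set.Icc (d t) (d 0) from
        ⟨le_max_left _ _, max_le hlt.le (by linarith)⟩)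
    have hlow : δ < d s := hds ▸ lt_max_of_lt_right (by linarith)
    have hhigh : d s < d 0 := hds ▸ max_lt hlt (by linarith)
    exact absurd (gap s ⟨hs.1, hs.2.trans ht.2⟩ hlow) hhigh.not_ge
  exact ⟨key, h0.trans_le key⟩
end

section
/- Let E be a real Hilbert space, n ≥ 1, and let S₁, …, Sₙ ⊆ E be nonempty closed sets. Fix a goal point x_g ∈ E, gains K_p ≥ 0 and K_r > 0, a safety threshold δ > 0, and T > 0. Define the composed potential U(y) = (1/2)·K_p·‖y − x_g‖² + Σᵢ (1/2)·K_r·(dᵢ(y) − δ)⁻², where dᵢ(y) = inf_{s ∈ Sᵢ} ‖y − s‖, on the open region Ω = {y : dᵢ(y) > δ for all i}. Let x : [0, T] → E be a trajectory with x(t) ∈ Ω for all t ∈ [0, T], and suppose that for every t ∈ [0, T], U has a gradient g(t) at x(t) and x has derivative x′(t) = −g(t) at t. Then U(x(0)) > 0 and, for every t ∈ [0, T] and every i ∈ {1, …, n}, the distance satisfies dᵢ(x(t)) ≥ δ + √(K_r/(2·U(x(0)))). In particular the trajectory remains at distance strictly greater than δ from every set Sᵢ. -/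
/-!
Along the gradient flow `x' = -∇U(x)` the chain rule gives `(U ∘ x)' = -‖∇U(x)‖² ≤ 0`, so
`U (x t) ≤ U (x 0)`. All terms of `U` are nonnegative, hence each single repulsive term
`(1/2)·K_r·(dᵢ - δ)⁻²` is at most `U (x t) ≤ U (x 0)`; solving this for `dᵢ`, which exceeds `δ`,
gives the separation bound.
-/

open scoped BigOperators

/-- Safety guarantee for the composed potential-field planner: along the gradient flow of
`U(y) = (1/2)·K_p·‖y − x_g‖² + ∑ i, (1/2)·K_r·(dᵢ(y) − δ)⁻²`, where `dᵢ` is the distance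
to the `i`-th obstacle reachable set, the robot keeps a separation of at least
`δ + √(K_r / (2·U(x 0)))` from every reachable set. -/
theorem safety_of_composed_potential_field
    {E : Type*} [NormedAddCommGroup E] [InnerProductSpace ℝ E] [CompleteSpace E]
    (n : ℕ) (hn : 1 ≤ n) (S : Fin n → Set E)
    (hSne : ∀ i, (S i).Nonempty) (hScl : ∀ i, IsClosed (S i))
    (x_g : E) (K_p K_r δ T : ℝ) (hKp : 0 ≤ K_p) (hKr : 0 < K_r) (hδ : 0 < δ) (hT : 0 < T)
    (U : E → ℝ)
    (hU : ∀ y : E, U y =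
      (1 / 2) * K_p * ‖y - x_g‖ ^ 2 +
        ∑ i : Fin n, (1 / 2) * K_r * (Metric.infDist y (S i) - δ)⁻¹ ^ 2)
    (x : ℝ → E) (g : ℝ → E)
    (hΩ : ∀ t ∈ Set.Icc (0 : ℝ) T, ∀ i : Fin n, δ < Metric.infDist (x t) (S i))
    (hgrad : ∀ t ∈ Set.Icc (0 : ℝ) T, HasGradientAt U (g t) (x t))
    (hderiv : ∀ t ∈ Set.Icc (0 : ℝ) T, HasDerivAt x (-(g t)) t) :
    0 < U (x 0) ∧
      ∀ t ∈ Set.Icc (0 : ℝ) T, ∀ i : Fin n,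
        δ + Real.sqrt (K_r / (2 * U (x 0))) ≤ Metric.infDist (x t) (S i) := by
  have hterm : ∀ y : E, ∀ i : Fin n,
      (1 / 2) * K_r * (Metric.infDist y (S i) - δ)⁻¹ ^ 2 ≤ U y := by
    intro y i
    rw [hU y]
    have h1 : (1 / 2) * K_r * (Metric.infDist y (S i) - δ)⁻¹ ^ 2 ≤
        ∑ j : Fin n, (1 / 2) * K_r * (Metric.infDist y (S j) - δ)⁻¹ ^ 2 :=
      Finset.single_le_sum
        (f := fun j : Fin n => (1 / 2) * K_r * (Metric.infDist y (S j) - δ)⁻¹ ^ 2)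
        (fun j _ => by positivity) (Finset.mem_univ i)
    have h2 : 0 ≤ (1 / 2) * K_p * ‖y - x_g‖ ^ 2 := by positivity
    linarith
  have h0 : (0 : ℝ) ∈ Set.Icc (0 : ℝ) T := ⟨le_rfl, hT.le⟩
  have hpos : 0 < U (x 0) := by
    have hd : 0 < Metric.infDist (x 0) (S ⟨0, hn⟩) - δ := sub_pos.mpr (hΩ 0 h0 ⟨0, hn⟩)
    exact lt_of_lt_of_le (by positivity) (hterm (x 0) ⟨0, hn⟩)
  have hUx : ∀ t ∈ Set.Icc (0 : ℝ) T, HasDerivAt (fun s => U (x s)) (-‖g t‖ ^ 2) t := by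
    intro t ht
    have h := (hgrad t ht).hasFDerivAt.comp_hasDerivAt t (hderiv t ht)
    simpa [Function.comp_def, inner_neg_right, real_inner_self_eq_norm_sq] using h
  have hanti : AntitoneOn (fun s => U (x s)) (Set.Icc (0 : ℝ) T) := by
    refine antitoneOn_of_hasDerivWithinAt_nonpos (convex_Icc 0 T)
      (fun t ht => (hUx t ht).continuousAt.continuousWithinAt)
      (fun t ht => (hUx t (interior_subset ht)).hasDerivWithinAt) (fun t _ => ?_)
    exact neg_nonpos.mpr (sq_nonneg _)
  refine ⟨hpos, fun t ht i => ?_⟩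
  have hd : 0 < Metric.infDist (x t) (S i) - δ := sub_pos.mpr (hΩ t ht i)
  have hle : (1 / 2) * K_r * (Metric.infDist (x t) (S i) - δ)⁻¹ ^ 2 ≤ U (x 0) :=
    (hterm (x t) i).trans (hanti h0 ht ht.1)
  have hsqrt : Real.sqrt (K_r / (2 * U (x 0))) ≤ Metric.infDist (x t) (S i) - δ := by
    refine Real.sqrt_le_iff.mpr ⟨hd.le, ?_⟩
    rw [inv_pow, ← div_eq_mul_inv, div_le_iff₀ (by positivity)] at hle
    rw [div_le_iff₀ (by positivity)]
    linarith
  linarith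
end
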